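/- arXiv:0710.5184 — 3 statements merged into one kernel-verified Lean document; each statement's English description precedes it below -/
import Mathlib

section
/- Main theorem (Theorem 2, transport equations). For every integer ν ≥ 1 and all points x = (r cos φ, r sin φ), ξ = (ρ cos ϕ, ρ sin ϕ) in ℝ² with r > 0, ρ > 0, W(φ) ≠ 0 and W(ϕ) ≠ 0, the functions U_ν satisfy U_0(x, ξ) = 1 and the Hadamard transport equations ⟨x − ξ, ∇_x U_ν(x, ξ)⟩ + ν·U_ν(x, ξ) = −(−Δ_x U_{ν−1}(x, ξ) + V_k(x)·U_{ν−1}(x, ξ)), where ∇_x and Δ_x are the gradient and Laplacian in the variable x. -/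
/-- The Wronskian of a family of `n` real functions: the determinant of the
`n × n` matrix whose `(i, j)`-entry is the `j`-th derivative of the `i`-th function. -/
noncomputable def wronsk {n : ℕ} (f : Fin n → ℝ → ℝ) (t : ℝ) : ℝ :=
  (Matrix.of fun i j : Fin n => iteratedDeriv (j : ℕ) (f i) t).det

/-- The functions `χ_i(φ) = cos(k_i φ + θ_i)`. -/
noncomputable def chiF (m : ℕ) (k : Fin (m + 1) → ℤ) (θ : Fin (m + 1) → ℝ)
    (i : Fin (m + 1)) : ℝ → ℝ :=
  fun φ => Real.cos ((k i : ℝ) * φ + θ i)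

/-- `W(φ) = Wr[χ_0, …, χ_m](φ)`. -/
noncomputable def Wfn (m : ℕ) (k : Fin (m + 1) → ℤ) (θ : Fin (m + 1) → ℝ) : ℝ → ℝ :=
  wronsk (chiF m k θ)

/-- `Ψ_i(φ) = Wr[χ_0, …, χ_{i-1}, χ_{i+1}, …, χ_m](φ) / W(φ)`. -/
noncomputable def PsiF (m : ℕ) (k : Fin (m + 1) → ℤ) (θ : Fin (m + 1) → ℝ)
    (i : Fin (m + 1)) : ℝ → ℝ :=
  fun φ => wronsk (fun j : Fin m => chiF m k θ (i.succAbove j)) φ / Wfn m k θ φ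

/-- `c_i = ∏_{j ≠ i} (k_i² − k_j²)`. -/
noncomputable def cF (m : ℕ) (k : Fin (m + 1) → ℤ) (i : Fin (m + 1)) : ℝ :=
  ∏ j ∈ Finset.univ.erase i, ((k i : ℝ) ^ 2 - (k j : ℝ) ^ 2)

/-- The Hadamard coefficients `U_ν` in polar coordinates:
`U_ν = ((−2)^ν/(rρ)^ν) ∑_i c_i Ψ_i(φ) Ψ_i(ϕ) T_{k_i}^{(ν)}(cos(φ − ϕ))`. -/
noncomputable def Ucoef (m : ℕ) (k : Fin (m + 1) → ℤ) (θ : Fin (m + 1) → ℝ)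
    (ν : ℕ) (r φ ρ ϕ : ℝ) : ℝ :=
  ((-2 : ℝ) ^ ν / (r * ρ) ^ ν) *
    ∑ i, cF m k i * PsiF m k θ i φ * PsiF m k θ i ϕ *
      (Polynomial.derivative^[ν] (Polynomial.Chebyshev.T ℝ (k i))).eval (Real.cos (φ - ϕ))

/-- The potential `V_k` in polar coordinates: `V_k = −(2/r²)·(d²/dφ²) log W(φ)`. -/
noncomputable def Vpot (m : ℕ) (k : Fin (m + 1) → ℤ) (θ : Fin (m + 1) → ℝ)
    (r φ : ℝ) : ℝ :=
  -(2 / r ^ 2) * deriv (deriv fun t => Real.log (Wfn m k θ t)) φ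

/-- First partial derivative in the first variable. -/
noncomputable def pdx (f : ℝ × ℝ → ℝ) (x : ℝ × ℝ) : ℝ := deriv (fun s => f (s, x.2)) x.1

/-- First partial derivative in the second variable. -/
noncomputable def pdy (f : ℝ × ℝ → ℝ) (x : ℝ × ℝ) : ℝ := deriv (fun s => f (x.1, s)) x.2

/-- The Laplacian on `ℝ²`. -/
noncomputable def lap2 (f : ℝ × ℝ → ℝ) (x : ℝ × ℝ) : ℝ := pdx (pdx f) x + pdy (pdy f) x

/-!
Up to sign, the `Ψ_i` form the last row of the inverse Wronski matrix of the `χ_i`: the sums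
`∑ ±Ψ_i χ_i^{(j)}` vanish for `j < m` and equal `1` for `j = m`. Differentiating these relations
twice gives Crum's identity `Ψ_i'' = -(k_i² + 2 (log W)'') Ψ_i`. They also provide a single
differential operator of order `m` in `t`, with leading coefficient `±1`, that sends every `χ_i(t)`
to `±c_i Ψ_i(s) cos (k_i (s - t))`; pairing the images with `±Ψ_i(t)` leaves only that coefficient,
so `U_0 = 1`. In polar coordinates `U_ν` is a function of the angle divided by `r^ν`, and the
transport equation becomes an ordinary differential equation in the angle, which holds for each
summand by Crum's identity and the differential equation of the derivatives of `T_N`.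
-/

open scoped ContDiff Matrix Topology

/-! ### Derivative of a determinant -/

theorem hasDerivAt_det {𝕜 n : Type*} [NontriviallyNormedField 𝕜] [Fintype n] [DecidableEq n]
    {M : 𝕜 → Matrix n n 𝕜} {M' : Matrix n n 𝕜} {t : 𝕜}
    (hM : ∀ i j, HasDerivAt (fun s => M s i j) (M' i j) t) :
    HasDerivAt (fun s => (M s).det) ((M t).adjugate * M').trace t := by
  let detRows : ContinuousMultilinearMap 𝕜 (fun _ : n => n → 𝕜) 𝕜 :=
    { toMultilinearMap := Matrix.detRowAlternating.toMultilinearMap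
      cont := Continuous.matrix_det continuous_id }
  have hrow (i : n) : HasFDerivAt (fun s => (M s)ᵀ i)
      (ContinuousLinearMap.toSpanSingleton 𝕜 (M'ᵀ i)) t :=
    (hasDerivAt_pi.2 fun j => hM j i).hasFDerivAt
  have htranspose :
      HasDerivAt (fun s => (M s)ᵀ.det) (∑ i, ((M t)ᵀ.updateRow i (M'ᵀ i)).det) t := by
    refine (HasFDerivAt.multilinear_comp (f := detRows) hrow).hasDerivAt.congr_deriv ?_
    simp only [sum_apply, ContinuousLinearMap.comp_apply,
      ContinuousMultilinearMap.toContinuousLinearMap_apply,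
      ContinuousLinearMap.toSpanSingleton_apply, one_smul]
    rfl
  simp only [Matrix.det_transpose] at htranspose
  refine htranspose.congr_deriv (Finset.sum_congr rfl fun i _ => ?_)
  rw [← Matrix.cramer_transpose_apply, Matrix.transpose_transpose,
    Matrix.cramer_eq_adjugate_mulVec]
  rfl

/-! ### The dual row of a Wronski matrix -/

/-- The matrix whose determinant is `wronsk f t`. -/
noncomputable def wronskMatrix {n : ℕ} (f : Fin n → ℝ → ℝ) (t : ℝ) : Matrix (Fin n) (Fin n) ℝ :=
  Matrix.of fun i j => iteratedDeriv (j : ℕ) (f i) t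

/-- The last row of the inverse Wronski matrix, as functions of the point. Up to sign these are
the quotients `Wr[f_0, …, f_{i-1}, f_{i+1}, …, f_m] / Wr[f_0, …, f_m]`. -/
noncomputable def wronskDual {m : ℕ} (f : Fin (m + 1) → ℝ → ℝ) (i : Fin (m + 1)) (t : ℝ) : ℝ :=
  (wronskMatrix f t)⁻¹ (Fin.last m) i

section Wronski

variable {m : ℕ} {f : Fin (m + 1) → ℝ → ℝ} {t : ℝ}

theorem wronskDual_eq_div (f : Fin (m + 1) → ℝ → ℝ) (i : Fin (m + 1)) (t : ℝ) :
    wronskDual f i t =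
      (-1) ^ (i + m : ℕ) * (wronsk (fun j => f (i.succAbove j)) t / wronsk f t) := by
  have hminor : ((wronskMatrix f t).submatrix i.succAbove (Fin.last m).succAbove).det =
      wronsk (fun j => f (i.succAbove j)) t := by
    simp [wronsk, wronskMatrix, Matrix.submatrix, Fin.succAbove_last]
  rw [wronskDual, Matrix.inv_def, Matrix.smul_apply, Matrix.adjugate_fin_succ_eq_det_submatrix,
    hminor, Ring.inverse_eq_inv', smul_eq_mul, Fin.val_last, div_eq_inv_mul]
  exact mul_left_comm _ _ _

theorem contDiff_wronsk {n : ℕ} {f : Fin n → ℝ → ℝ} (hf : ∀ i, ContDiff ℝ ∞ (f i)) :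
    ContDiff ℝ ∞ (wronsk f) := by
  have hentry (i j : Fin n) : ContDiff ℝ ∞ (iteratedDeriv (j : ℕ) (f i)) := by
    rw [iteratedDeriv_eq_iterate]
    exact ContDiff.iterate_deriv j (hf i)
  unfold wronsk
  simp only [Matrix.det_apply, Matrix.of_apply]
  exact ContDiff.sum fun σ _ => (contDiff_prod fun i _ => hentry _ _).const_smul _

theorem contDiffAt_wronskDual (hf : ∀ i, ContDiff ℝ ∞ (f i)) (ht : wronsk f t ≠ 0)
    (i : Fin (m + 1)) : ContDiffAt ℝ ∞ (wronskDual f i) t := by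
  rw [funext (wronskDual_eq_div f i)]
  exact contDiffAt_const.mul
    ((contDiff_wronsk fun j => hf (i.succAbove j)).contDiffAt.div
      (contDiff_wronsk hf).contDiffAt ht)

theorem sum_wronskDual_mul_iteratedDeriv (ht : wronsk f t ≠ 0) {j : ℕ} (hj : j ≤ m) :
    ∑ i, wronskDual f i t * iteratedDeriv j (f i) t = if j = m then 1 else 0 := by
  have hinv := Matrix.nonsing_inv_mul (wronskMatrix f t) (isUnit_iff_ne_zero.2 ht)
  have hentry := congrFun (congrFun hinv (Fin.last m)) ⟨j, Nat.lt_succ_of_le hj⟩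
  simp only [Matrix.mul_apply, Matrix.one_apply, Fin.ext_iff, Fin.val_last,
    eq_comm (a := m)] at hentry
  exact hentry

theorem hasDerivAt_iteratedDeriv {g : ℝ → ℝ} (hg : ContDiff ℝ ∞ g) (j : ℕ) (t : ℝ) :
    HasDerivAt (iteratedDeriv j g) (iteratedDeriv (j + 1) g t) t := by
  rw [iteratedDeriv_succ]
  exact (hg.differentiable_iteratedDeriv j (mod_cast WithTop.coe_lt_top _) t).hasDerivAt

/-- In the Jacobi formula the rows of the inverse pair with the columns one derivative up, so only
the last diagonal entry of the trace survives. -/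
theorem deriv_log_wronsk (hf : ∀ i, ContDiff ℝ ∞ (f i)) (ht : wronsk f t ≠ 0) :
    deriv (fun s => Real.log (wronsk f s)) t =
      ∑ i, wronskDual f i t * iteratedDeriv (m + 1) (f i) t := by
  let M' : Matrix (Fin (m + 1)) (Fin (m + 1)) ℝ :=
    Matrix.of fun i j => iteratedDeriv (j + 1 : ℕ) (f i) t
  have hderiv : HasDerivAt (wronsk f) ((wronskMatrix f t).adjugate * M').trace t :=
    hasDerivAt_det fun i j => hasDerivAt_iteratedDeriv (hf i) j t
  have hinv := Matrix.nonsing_inv_mul (wronskMatrix f t) (isUnit_iff_ne_zero.2 ht)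
  have hdiag (j : Fin m) : ((wronskMatrix f t)⁻¹ * M') j.castSucc j.castSucc = 0 := by
    have hentry := congrFun (congrFun hinv j.castSucc) j.succ
    rwa [Matrix.one_apply_ne (Fin.castSucc_lt_succ).ne, Matrix.mul_apply] at hentry
  rw [(hderiv.log ht).deriv, div_eq_inv_mul, ← Ring.inverse_eq_inv', ← smul_eq_mul,
    ← Matrix.trace_smul, ← Matrix.smul_mul]
  change ((wronskMatrix f t)⁻¹ * M').trace = _
  rw [Matrix.trace, Fin.sum_univ_castSucc]
  simp only [Matrix.diag_apply, hdiag, Finset.sum_const_zero, zero_add]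
  rfl

end Wronski

/-! ### Crum's identity -/

section Crum

variable {ι : Type*} [Fintype ι] {A v : ι → ℝ → ℝ} {t : ℝ}

theorem sum_deriv_mul (hA : ∀ i, DifferentiableAt ℝ (A i) t)
    (hv : ∀ i, DifferentiableAt ℝ (v i) t) :
    ∑ i, deriv (A i) t * v i t =
      deriv (fun s => ∑ i, A i s * v i s) t - ∑ i, A i t * deriv (v i) t := by
  rw [deriv_fun_sum fun i _ => (hA i).fun_mul (hv i)]
  simp only [deriv_fun_mul (hA _) (hv _), Finset.sum_add_distrib, add_sub_cancel_right]

theorem sum_deriv_deriv_mul_of_eventually_const {c : ℝ} (hA : ∀ i, ContDiffAt ℝ 2 (A i) t)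
    (hv : ∀ i, ContDiffAt ℝ 2 (v i) t) (hc : ∀ᶠ s in 𝓝 t, ∑ i, A i s * v i s = c) :
    ∑ i, deriv (deriv (A i)) t * v i t =
      ∑ i, A i t * deriv (deriv (v i)) t - 2 * deriv (fun s => ∑ i, A i s * deriv (v i) s) t := by
  have hA' (i : ι) : DifferentiableAt ℝ (deriv (A i)) t :=
    ((hA i).derivWithin (m := 1) (by norm_num)).differentiableAt one_ne_zero
  have hv' (i : ι) : DifferentiableAt ℝ (deriv (v i)) t :=
    ((hv i).derivWithin (m := 1) (by norm_num)).differentiableAt one_ne_zero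
  have hdiff {g : ι → ℝ → ℝ} (hg : ∀ i, ContDiffAt ℝ 2 (g i) t) :
      ∀ᶠ s in 𝓝 t, ∀ i, DifferentiableAt ℝ (g i) s :=
    Filter.eventually_all.2 fun i =>
      ((hg i).eventually (by simp)).mono fun s hs => hs.differentiableAt two_ne_zero
  have hfirst : (fun s => ∑ i, deriv (A i) s * v i s) =ᶠ[𝓝 t]
      fun s => -∑ i, A i s * deriv (v i) s := by
    filter_upwards [hdiff hA, hdiff hv, hc.eventually_nhds] with s hAs hvs hcs
    have hcs' : (fun u => ∑ i, A i u * v i u) =ᶠ[𝓝 s] fun _ => c := hcs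
    rw [sum_deriv_mul hAs hvs, hcs'.deriv_eq, deriv_const, zero_sub]
  have hAv : ∑ i, deriv (deriv (A i)) t * v i t =
      -deriv (fun s => ∑ i, A i s * deriv (v i) s) t - ∑ i, deriv (A i) t * deriv (v i) t := by
    rw [sum_deriv_mul hA' fun i => (hv i).differentiableAt two_ne_zero, hfirst.deriv_eq,
      deriv.fun_neg]
  rw [hAv, sum_deriv_mul (fun i => (hA i).differentiableAt two_ne_zero) hv']
  ring

end Crum

section Wronski

variable {m : ℕ} {f : Fin (m + 1) → ℝ → ℝ} {t : ℝ}

theorem eventually_wronsk_ne_zero (hf : ∀ i, ContDiff ℝ ∞ (f i)) (ht : wronsk f t ≠ 0) :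
    ∀ᶠ s in 𝓝 t, wronsk f s ≠ 0 :=
  (contDiff_wronsk hf).continuous.continuousAt.eventually_ne ht

theorem deriv_sum_wronskDual_mul_iteratedDeriv_succ (hf : ∀ i, ContDiff ℝ ∞ (f i))
    (ht : wronsk f t ≠ 0) {j : ℕ} (hj : j ≤ m) :
    deriv (fun s => ∑ i, wronskDual f i s * iteratedDeriv (j + 1) (f i) s) t =
      if j = m then deriv (deriv fun s => Real.log (wronsk f s)) t else 0 := by
  have hW := eventually_wronsk_ne_zero hf ht
  split_ifs with hjm
  · subst hjm
    have hlog : deriv (fun s => Real.log (wronsk f s)) =ᶠ[𝓝 t]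
        fun s => ∑ i, wronskDual f i s * iteratedDeriv (j + 1) (f i) s :=
      hW.mono fun s hs => deriv_log_wronsk hf hs
    exact hlog.deriv_eq.symm
  · have hconst : (fun s => ∑ i, wronskDual f i s * iteratedDeriv (j + 1) (f i) s) =ᶠ[𝓝 t]
        fun _ => if j + 1 = m then 1 else 0 :=
      hW.mono fun s hs => sum_wronskDual_mul_iteratedDeriv hs (by lia)
    rw [hconst.deriv_eq, deriv_const]

/-- Both sides have the same pairing with every column of the Wronski matrix. -/
theorem deriv_deriv_wronskDual {lam : Fin (m + 1) → ℝ} (hf : ∀ i, ContDiff ℝ ∞ (f i))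
    (hlam : ∀ i j s, iteratedDeriv (j + 2) (f i) s = lam i * iteratedDeriv j (f i) s)
    (ht : wronsk f t ≠ 0) (i : Fin (m + 1)) :
    deriv (deriv (wronskDual f i)) t =
      (lam i - 2 * deriv (deriv fun s => Real.log (wronsk f s)) t) * wronskDual f i t := by
  set L := deriv (deriv fun s => Real.log (wronsk f s)) t with hL
  have hcolumn (j : Fin (m + 1)) :
      ∑ i, deriv (deriv (wronskDual f i)) t * iteratedDeriv (j : ℕ) (f i) t =
        ∑ i, (lam i - 2 * L) * wronskDual f i t * iteratedDeriv (j : ℕ) (f i) t := by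
    have hj : (j : ℕ) ≤ m := Nat.le_of_lt_succ j.2
    have hsmooth (i : Fin (m + 1)) : ContDiffAt ℝ 2 (iteratedDeriv (j : ℕ) (f i)) t := by
      rw [iteratedDeriv_eq_iterate]
      exact contDiff_infty.1 (ContDiff.iterate_deriv j (hf i)) 2 |>.contDiffAt
    rw [sum_deriv_deriv_mul_of_eventually_const
      (fun i => contDiffAt_infty.1 (contDiffAt_wronskDual hf ht i) 2) hsmooth
      ((eventually_wronsk_ne_zero hf ht).mono fun s hs => sum_wronskDual_mul_iteratedDeriv hs hj)]
    simp only [← iteratedDeriv_succ, hlam, sub_mul, Finset.sum_sub_distrib]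
    rw [deriv_sum_wronskDual_mul_iteratedDeriv_succ hf ht hj, ← hL]
    simp only [mul_assoc, ← Finset.mul_sum, sum_wronskDual_mul_iteratedDeriv ht hj, mul_ite,
      mul_one, mul_zero, mul_left_comm _ (lam _)]
  have hvecMul : (fun i => deriv (deriv (wronskDual f i)) t - (lam i - 2 * L) * wronskDual f i t)
      ᵥ* wronskMatrix f t = 0 := by
    ext j
    change ∑ i, (_ - _) * iteratedDeriv (j : ℕ) (f i) t = 0
    rw [Finset.sum_congr rfl fun i _ => sub_mul _ (_ * wronskDual f i t) _,
      Finset.sum_sub_distrib, hcolumn, sub_self]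
  exact sub_eq_zero.1 (congrFun (Matrix.eq_zero_of_vecMul_eq_zero ht hvecMul) i)

end Wronski

/-! ### Pairing two dual rows -/

section Pairing

open Polynomial

variable {R : Type*} [CommRing R]

/-- The linear functional on polynomials sending `X ^ a` to `y a`. When `y a` is the `a`-th
derivative of `f` at `t`, it sends `p` to the value at `t` of `p(d/dt) f`. -/
noncomputable def momentFunctional (y : ℕ → R) : R[X] →ₗ[R] R :=
  lsum fun a => LinearMap.toSpanSingleton R R (y a)

theorem momentFunctional_apply (y : ℕ → R) (p : R[X]) :
    momentFunctional y p = p.sum fun a c => c * y a :=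
  rfl

theorem momentFunctional_monomial (y : ℕ → R) (a : ℕ) (c : R) :
    momentFunctional y (monomial a c) = c * y a := by
  simp only [momentFunctional_apply, sum_monomial_index, zero_mul]

theorem momentFunctional_eq_sum_range {y : ℕ → R} {p : R[X]} {n : ℕ} (hp : p.natDegree < n) :
    momentFunctional y p = ∑ a ∈ Finset.range n, p.coeff a * y a :=
  sum_over_range' p (f := fun a c => c * y a) (fun _ => zero_mul _) n hp

theorem momentFunctional_X_sq_sub_C_mul {y : ℕ → R} {c : R} (hy : ∀ a, y (a + 2) = c * y a)
    (d : R) (p : R[X]) :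
    momentFunctional y ((X ^ 2 - C d) * p) = (c - d) * momentFunctional y p := by
  have hX : momentFunctional y (X ^ 2 * p) = c * momentFunctional y p := by
    induction p using Polynomial.induction_on' with
    | add p q hp hq => rw [mul_add, map_add, map_add, hp, hq, mul_add]
    | monomial a b =>
      rw [X_pow_mul_monomial]
      simp only [momentFunctional_monomial, hy]
      exact mul_left_comm _ _ _
  rw [sub_mul, map_sub, hX, ← smul_eq_C_mul, map_smul, smul_eq_mul, sub_mul]

theorem momentFunctional_prod_mul {ι : Type*} {y : ℕ → R} {c : R}
    (hy : ∀ a, y (a + 2) = c * y a) (lam : ι → R) (s : Finset ι) (p : R[X]) :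
    momentFunctional y ((∏ l ∈ s, (X ^ 2 - C (lam l))) * p) =
      (∏ l ∈ s, (c - lam l)) * momentFunctional y p := by
  classical
  induction s using Finset.induction_on with
  | empty => simp only [Finset.prod_empty, one_mul]
  | insert l s hl ih =>
    rw [Finset.prod_insert hl, Finset.prod_insert hl, mul_assoc,
      momentFunctional_X_sq_sub_C_mul hy, ih, mul_assoc]

theorem X_sq_sub_C_mul_sum_antidiagonal {y : ℕ → R} {c : R} (hy : ∀ a, y (a + 2) = c * y a)
    (m : ℕ) :
    (X ^ 2 - C c) * ∑ p ∈ Finset.HasAntidiagonal.antidiagonal m, C ((-1) ^ p.1 * y p.1) * X ^ p.2 =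
      X ^ (m + 1) * (C (y 0) * X - C (y 1)) +
        C ((-1) ^ m) * (C (y (m + 1)) * X - C (y (m + 2))) := by
  induction m with
  | zero =>
    simp only [Finset.Nat.antidiagonal_zero, Finset.sum_singleton, pow_zero, one_mul, mul_one,
      zero_add, pow_one, hy 0, C_mul, C_1]
    ring
  | succ m ih =>
    have hshift (p : ℕ × ℕ) :
        C ((-1) ^ p.1 * y p.1) * X ^ (p.2 + 1) = C ((-1) ^ p.1 * y p.1) * X ^ p.2 * X := by
      rw [pow_succ, mul_assoc]
    rw [Finset.Nat.sum_antidiagonal_succ']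
    simp only [hshift, ← Finset.sum_mul, mul_add, ← mul_assoc, ih]
    simp only [pow_zero, mul_one, hy (m + 1), hy m, map_mul, map_pow, map_neg, map_one]
    ring

section DualSymbol

variable {ι : Type*} [Fintype ι] [DecidableEq ι] {m : ℕ} {i₀ : ι} {lam α : ι → R} {y : ι → ℕ → R}

/-- A polynomial `p` for which the differential operator `p(d/dt)` sends `cos (k i * t + θ i)` to
`∏_{j ≠ i} (lam i - lam j) * α i * cos (k i * (s - t))`, where `lam i = -(k i)²`, `y i a` is the
`a`-th derivative of `cos (k i * t + θ i)` at `t = s`, and `k i₀ = θ i₀ = 0`. -/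
noncomputable def dualSymbol (i₀ : ι) (lam α : ι → R) (y : ι → ℕ → R) : R[X] :=
  (∏ l ∈ Finset.univ.erase i₀, (X ^ 2 - C (lam l))) * C (α i₀ * y i₀ 0) +
    ∑ i ∈ Finset.univ.erase i₀, (∏ l ∈ (Finset.univ.erase i₀).erase i, (X ^ 2 - C (lam l))) *
      (C (α i) * (C (y i 0) * X ^ 2 - C (y i 1) * X))

theorem X_mul_dualSymbol (hlam₀ : lam i₀ = 0) (hy₀ : y i₀ 1 = 0) :
    X * dualSymbol i₀ lam α y = ∑ i, C (α i) * (C (y i 0) * X - C (y i 1)) *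
      ∏ l ∈ Finset.univ.erase i, (X ^ 2 - C (lam l)) := by
  have hterm {i : ι} (hi : i ∈ Finset.univ.erase i₀) :
      ∏ l ∈ Finset.univ.erase i, (X ^ 2 - C (lam l)) =
        X ^ 2 * ∏ l ∈ (Finset.univ.erase i₀).erase i, (X ^ 2 - C (lam l)) := by
    rw [Finset.erase_right_comm, ← Finset.mul_prod_erase _ _
      (Finset.mem_erase.2 ⟨(Finset.ne_of_mem_erase hi).symm, Finset.mem_univ i₀⟩), hlam₀, C_0,
      sub_zero]
  rw [← Finset.add_sum_erase _ _ (Finset.mem_univ i₀), dualSymbol, mul_add, Finset.mul_sum, hy₀]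
  congr 1
  · simp only [C_mul, C_0, sub_zero]
    ring
  · refine Finset.sum_congr rfl fun i hi => ?_
    rw [hterm hi]
    ring

/-- The sign and the error term come from truncating the geometric expansion of
`∑ i, α i * (y i 0 * X - y i 1) / (X ^ 2 - lam i)` in `1 / X`. -/
theorem X_pow_mul_dualSymbol (hlam₀ : lam i₀ = 0) (hy₀ : y i₀ 1 = 0)
    (hy : ∀ i a, y i (a + 2) = lam i * y i a)
    (hα : ∀ a ≤ m, ∑ i, α i * y i a = if a = m then 1 else 0) :
    X ^ (m + 2) * dualSymbol i₀ lam α y = C ((-1) ^ m) * (∏ i, (X ^ 2 - C (lam i)) -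
      ∑ i, C (α i) * (C (y i (m + 1)) * X - C (y i (m + 2))) *
        ∏ l ∈ Finset.univ.erase i, (X ^ 2 - C (lam l))) := by
  let G (i : ι) : R[X] :=
    ∑ p ∈ Finset.HasAntidiagonal.antidiagonal m, C ((-1) ^ p.1 * y i p.1) * X ^ p.2
  have hG : ∑ i, C (α i) * G i = C ((-1) ^ m) := by
    have hswap : ∑ i, C (α i) * G i = ∑ p ∈ Finset.HasAntidiagonal.antidiagonal m,
        C ((-1) ^ p.1 * ∑ i, α i * y i p.1) * X ^ p.2 := by
      simp only [G, Finset.mul_sum, Finset.sum_mul, map_sum, C_mul]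
      rw [Finset.sum_comm]
      exact Finset.sum_congr rfl fun p _ => Finset.sum_congr rfl fun i _ => by ring
    rw [hswap, Finset.Nat.sum_antidiagonal_eq_sum_range_succ_mk, Finset.sum_range_succ,
      Finset.sum_eq_zero fun a ha => ?_, hα m le_rfl]
    · simp only [if_true, mul_one, Nat.sub_self, pow_zero, zero_add]
    · have ha' := Finset.mem_range.1 ha
      rw [hα a ha'.le, if_neg ha'.ne, mul_zero, C_0, zero_mul]
  have hprod (i : ι) : X ^ (m + 1) * (C (α i) * (C (y i 0) * X - C (y i 1)) *
      ∏ l ∈ Finset.univ.erase i, (X ^ 2 - C (lam l))) =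
      C (α i) * G i * ∏ l, (X ^ 2 - C (lam l)) - C ((-1) ^ m) *
        (C (α i) * (C (y i (m + 1)) * X - C (y i (m + 2))) *
          ∏ l ∈ Finset.univ.erase i, (X ^ 2 - C (lam l))) := by
    rw [← Finset.mul_prod_erase _ _ (Finset.mem_univ i)]
    linear_combination (-C (α i) * ∏ l ∈ Finset.univ.erase i, (X ^ 2 - C (lam l))) *
      X_sq_sub_C_mul_sum_antidiagonal (hy i) m
  rw [pow_succ, mul_assoc, X_mul_dualSymbol hlam₀ hy₀, Finset.mul_sum,
    Finset.sum_congr rfl fun i _ => hprod i, Finset.sum_sub_distrib, ← Finset.sum_mul, hG,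
    ← Finset.mul_sum, mul_sub]

theorem coeff_dualSymbol (hcard : Fintype.card ι = m + 1) (hlam₀ : lam i₀ = 0) (hy₀ : y i₀ 1 = 0)
    (hy : ∀ i a, y i (a + 2) = lam i * y i a)
    (hα : ∀ a ≤ m, ∑ i, α i * y i a = if a = m then 1 else 0) {a : ℕ} (ha : m ≤ a) :
    (dualSymbol i₀ lam α y).coeff a = if a = m then (-1) ^ m else 0 := by
  nontriviality R
  have hmonic (s : Finset ι) : (∏ l ∈ s, (X ^ 2 - C (lam l))).Monic :=
    monic_prod_of_monic _ _ fun l _ => monic_X_pow_sub_C _ two_ne_zero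
  have hdeg (s : Finset ι) : (∏ l ∈ s, (X ^ 2 - C (lam l))).natDegree = 2 * s.card := by
    rw [natDegree_prod_of_monic _ _ fun l _ => monic_X_pow_sub_C _ two_ne_zero]
    simp only [natDegree_X_pow_sub_C, Finset.sum_const, smul_eq_mul, mul_comm]
  have herr (i : ι) : (C (α i) * (C (y i (m + 1)) * X - C (y i (m + 2))) *
      ∏ l ∈ Finset.univ.erase i, (X ^ 2 - C (lam l))).coeff (a + (m + 2)) = 0 := by
    refine coeff_eq_zero_of_natDegree_lt (lt_of_le_of_lt natDegree_mul_le ?_)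
    have hlinear : (C (α i) * (C (y i (m + 1)) * X - C (y i (m + 2)))).natDegree ≤ 1 := by
      compute_degree
    rw [hdeg, Finset.card_erase_of_mem (Finset.mem_univ i), Finset.card_univ, hcard]
    lia
  rw [← coeff_X_pow_mul _ (m + 2), X_pow_mul_dualSymbol hlam₀ hy₀ hy hα, coeff_C_mul, coeff_sub,
    finsetSum_coeff, Finset.sum_eq_zero fun i _ => herr i, sub_zero]
  have hdeg_univ : (∏ i, (X ^ 2 - C (lam i))).natDegree = m + (m + 2) := by
    rw [hdeg, Finset.card_univ, hcard]
    ring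
  split_ifs with ham
  · rw [ham, ← hdeg_univ, (hmonic _).coeff_natDegree, mul_one]
  · rw [coeff_eq_zero_of_natDegree_lt (by lia), mul_zero]

variable {β K : ι → R} {z : ι → ℕ → R}

theorem momentFunctional_dualSymbol (hlam₀ : lam i₀ = 0) (hz₀ : z i₀ 1 = 0)
    (hz : ∀ i a, z i (a + 2) = lam i * z i a) (hK₀ : K i₀ = y i₀ 0 * z i₀ 0)
    (hK : ∀ i, lam i * K i = lam i * (y i 0 * z i 0) - y i 1 * z i 1) (i : ι) :
    momentFunctional (z i) (dualSymbol i₀ lam α y) =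
      (∏ l ∈ Finset.univ.erase i, (lam i - lam l)) * (α i * K i) := by
  have hconst (c : R) : momentFunctional (z i) (C c) = c * z i 0 :=
    momentFunctional_monomial _ 0 c
  have hquad (a b c : R) : momentFunctional (z i) (C a * (C b * X ^ 2 - C c * X)) =
      a * (b * (lam i * z i 0) - c * z i 1) := by
    rw [← smul_eq_C_mul a, map_smul, map_sub, C_mul_X_pow_eq_monomial, C_mul_X_eq_monomial,
      momentFunctional_monomial, momentFunctional_monomial, hz, smul_eq_mul]
  rw [dualSymbol, map_add, map_sum, momentFunctional_prod_mul (hz i), hconst]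
  simp only [momentFunctional_prod_mul (hz i), hquad]
  have hvanish {s : Finset ι} (hi : i ∈ s) : ∏ l ∈ s, (lam i - lam l) = 0 :=
    Finset.prod_eq_zero hi (sub_self _)
  rcases eq_or_ne i i₀ with rfl | hi
  · simp only [hlam₀, hz₀, hK₀, zero_mul, mul_zero, sub_zero, Finset.sum_const_zero, add_zero,
      mul_assoc]
  · have hmem : i ∈ Finset.univ.erase i₀ := Finset.mem_erase.2 ⟨hi, Finset.mem_univ i⟩
    rw [hvanish hmem, zero_mul, zero_add, Finset.sum_eq_single_of_mem i hmem fun j _ hj => by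
      rw [hvanish (Finset.mem_erase.2 ⟨hj.symm, hmem⟩), zero_mul],
      ← Finset.mul_prod_erase _ _ (Finset.mem_erase.2 ⟨hi.symm, Finset.mem_univ i₀⟩),
      Finset.erase_right_comm (a := i) (b := i₀), hlam₀]
    linear_combination (-α i * ∏ l ∈ (Finset.univ.erase i₀).erase i, (lam i - lam l)) * hK i

theorem sum_mul_prod_sub_mul_eq_neg_one_pow (hcard : Fintype.card ι = m + 1)
    (hlam₀ : lam i₀ = 0) (hy₀ : y i₀ 1 = 0) (hz₀ : z i₀ 1 = 0)
    (hy : ∀ i a, y i (a + 2) = lam i * y i a) (hz : ∀ i a, z i (a + 2) = lam i * z i a)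
    (hα : ∀ a ≤ m, ∑ i, α i * y i a = if a = m then 1 else 0)
    (hβ : ∀ a ≤ m, ∑ i, β i * z i a = if a = m then 1 else 0)
    (hK₀ : K i₀ = y i₀ 0 * z i₀ 0)
    (hK : ∀ i, lam i * K i = lam i * (y i 0 * z i 0) - y i 1 * z i 1) :
    ∑ i, β i * ((∏ l ∈ Finset.univ.erase i, (lam i - lam l)) * (α i * K i)) = (-1) ^ m := by
  have hcoeff {a : ℕ} (ha : m ≤ a) := coeff_dualSymbol hcard hlam₀ hy₀ hy hα ha
  have hdeg : (dualSymbol i₀ lam α y).natDegree < m + 1 :=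
    Nat.lt_succ_of_le <| natDegree_le_iff_coeff_eq_zero.2 fun a ha => by
      rw [hcoeff ha.le, if_neg ha.ne']
  simp only [← momentFunctional_dualSymbol hlam₀ hz₀ hz hK₀ hK, momentFunctional_eq_sum_range hdeg,
    Finset.mul_sum, mul_left_comm (β _)]
  rw [Finset.sum_comm]
  simp only [← Finset.mul_sum]
  rw [Finset.sum_range_succ, Finset.sum_eq_zero fun a ha => ?_, hβ m le_rfl, hcoeff le_rfl]
  · simp only [if_true, mul_one, zero_add]
  · have ha' := Finset.mem_range.1 ha
    rw [hβ a ha'.le, if_neg ha'.ne, mul_zero]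

end DualSymbol

end Pairing

/-! ### The functions `χ_i` and `Ψ_i` -/

section Chi

variable {m : ℕ} (k : Fin (m + 1) → ℤ) (θ : Fin (m + 1) → ℝ)

theorem contDiff_chiF (i : Fin (m + 1)) : ContDiff ℝ ∞ (chiF m k θ i) :=
  Real.contDiff_cos.comp ((contDiff_const.mul contDiff_id).add contDiff_const)

theorem deriv_chiF (i : Fin (m + 1)) :
    deriv (chiF m k θ i) = fun s => -(k i * Real.sin (k i * s + θ i)) := by
  funext s
  have harg : HasDerivAt (fun s : ℝ => (k i : ℝ) * s + θ i) (k i) s :=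
    ((hasDerivAt_id' s).const_mul _).add_const _ |>.congr_deriv (mul_one _)
  exact harg.cos.deriv.trans (by ring)

theorem deriv_deriv_chiF (i : Fin (m + 1)) :
    deriv (deriv (chiF m k θ i)) = fun s => -(k i : ℝ) ^ 2 * chiF m k θ i s := by
  funext s
  have harg : HasDerivAt (fun s : ℝ => (k i : ℝ) * s + θ i) (k i) s :=
    ((hasDerivAt_id' s).const_mul _).add_const _ |>.congr_deriv (mul_one _)
  rw [deriv_chiF]
  exact (harg.sin.const_mul _).neg.deriv.trans (by rw [chiF]; ring)

theorem iteratedDeriv_add_two_chiF (i : Fin (m + 1)) (j : ℕ) (s : ℝ) :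
    iteratedDeriv (j + 2) (chiF m k θ i) s = -(k i : ℝ) ^ 2 * iteratedDeriv j (chiF m k θ i) s := by
  rw [iteratedDeriv_succ', iteratedDeriv_succ', deriv_deriv_chiF, iteratedDeriv_const_mul_field]

theorem PsiF_eq_wronskDual (i : Fin (m + 1)) (s : ℝ) :
    PsiF m k θ i s = (-1) ^ (i + m : ℕ) * wronskDual (chiF m k θ) i s := by
  rw [wronskDual_eq_div, ← mul_assoc, ← mul_pow, neg_mul_neg, one_mul, one_pow, one_mul, PsiF, Wfn]

theorem contDiffAt_PsiF {s : ℝ} (hs : Wfn m k θ s ≠ 0) (i : Fin (m + 1)) :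
    ContDiffAt ℝ ∞ (PsiF m k θ i) s := by
  rw [funext (PsiF_eq_wronskDual k θ i)]
  exact contDiffAt_const.mul (contDiffAt_wronskDual (contDiff_chiF k θ) hs i)

theorem deriv_deriv_PsiF {s : ℝ} (hs : Wfn m k θ s ≠ 0) (i : Fin (m + 1)) :
    deriv (deriv (PsiF m k θ i)) s =
      -((k i : ℝ) ^ 2 + 2 * deriv (deriv fun u => Real.log (Wfn m k θ u)) s) *
        PsiF m k θ i s := by
  have hderiv : deriv (PsiF m k θ i) =
      fun u => (-1) ^ (i + m : ℕ) * deriv (wronskDual (chiF m k θ) i) u := by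
    rw [funext (PsiF_eq_wronskDual k θ i)]
    exact funext fun u => deriv_const_mul_field _
  have hCrum := deriv_deriv_wronskDual (contDiff_chiF k θ) (iteratedDeriv_add_two_chiF k θ) hs i
  rw [hderiv, deriv_const_mul_field, hCrum, PsiF_eq_wronskDual]
  unfold Wfn
  ring

theorem cF_eq_neg_one_pow_mul_prod (i : Fin (m + 1)) :
    cF m k i = (-1) ^ m * ∏ j ∈ Finset.univ.erase i, (-(k i : ℝ) ^ 2 - -(k j : ℝ) ^ 2) := by
  have hsign : (-1 : ℝ) ^ m = ∏ _j ∈ Finset.univ.erase i, (-1 : ℝ) := by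
    rw [Finset.prod_const, Finset.card_erase_of_mem (Finset.mem_univ i), Finset.card_univ,
      Fintype.card_fin, Nat.add_sub_cancel]
  rw [hsign, ← Finset.prod_mul_distrib]
  exact Finset.prod_congr rfl fun j _ => by ring

variable {k θ}

theorem sum_cF_mul_PsiF_mul_PsiF_mul_cos (hk0 : k 0 = 0) (hθ0 : θ 0 = 0) {s t : ℝ}
    (hs : Wfn m k θ s ≠ 0) (ht : Wfn m k θ t ≠ 0) :
    ∑ i, cF m k i * PsiF m k θ i s * PsiF m k θ i t * Real.cos (k i * (s - t)) = 1 := by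
  have hpairing := sum_mul_prod_sub_mul_eq_neg_one_pow (m := m) (i₀ := 0)
    (lam := fun i => -(k i : ℝ) ^ 2) (α := fun i => wronskDual (chiF m k θ) i s)
    (β := fun i => wronskDual (chiF m k θ) i t) (K := fun i => Real.cos (k i * (s - t)))
    (y := fun i a => iteratedDeriv a (chiF m k θ i) s)
    (z := fun i a => iteratedDeriv a (chiF m k θ i) t)
    (Fintype.card_fin _) (by simp [hk0]) (by simp [iteratedDeriv_one, deriv_chiF, hk0])
    (by simp [iteratedDeriv_one, deriv_chiF, hk0])
    (fun i a => iteratedDeriv_add_two_chiF k θ i a s)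
    (fun i a => iteratedDeriv_add_two_chiF k θ i a t)
    (fun a ha => sum_wronskDual_mul_iteratedDeriv hs ha)
    (fun a ha => sum_wronskDual_mul_iteratedDeriv ht ha)
    (by simp [iteratedDeriv_zero, chiF, hk0, hθ0])
    (fun i => by
      have hdiff : k i * (s - t) = (k i * s + θ i) - (k i * t + θ i) := by ring
      simp only [iteratedDeriv_zero, iteratedDeriv_one, deriv_chiF, chiF, hdiff, Real.cos_sub]
      ring)
  have hsign (n : ℕ) : (-1 : ℝ) ^ n * (-1) ^ n = 1 := by
    rw [← mul_pow, neg_mul_neg, one_mul, one_pow]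
  have hsum := congrArg ((-1) ^ m * ·) hpairing
  simp only [Finset.mul_sum, hsign] at hsum
  refine (Finset.sum_congr rfl fun i _ => ?_).trans hsum
  rw [cF_eq_neg_one_pow_mul_prod, PsiF_eq_wronskDual, PsiF_eq_wronskDual]
  linear_combination ((-1) ^ m * (∏ j ∈ Finset.univ.erase i, (-(k i : ℝ) ^ 2 - -(k j : ℝ) ^ 2)) *
    wronskDual (chiF m k θ) i s * wronskDual (chiF m k θ) i t * Real.cos (k i * (s - t))) *
    hsign (i + m)

theorem Ucoef_zero (hk0 : k 0 = 0) (hθ0 : θ 0 = 0) {φ ϕ : ℝ} (r ρ : ℝ)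
    (hφ : Wfn m k θ φ ≠ 0) (hϕ : Wfn m k θ ϕ ≠ 0) : Ucoef m k θ 0 r φ ρ ϕ = 1 := by
  simp only [Ucoef, pow_zero, div_one, one_mul, Function.iterate_zero, id,
    Polynomial.Chebyshev.T_real_cos]
  exact sum_cF_mul_PsiF_mul_PsiF_mul_cos hk0 hθ0 hφ hϕ

end Chi

/-! ### Partial derivatives in polar coordinates -/

theorem differentiableAt_of_comp_hasStrictFDerivAt_equiv {𝕜 E F G : Type*}
    [NontriviallyNormedField 𝕜] [NormedAddCommGroup E] [NormedSpace 𝕜 E] [CompleteSpace E]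
    [NormedAddCommGroup F] [NormedSpace 𝕜 F] [NormedAddCommGroup G] [NormedSpace 𝕜 G]
    {f : F → G} {P : E → F} {P' : E ≃L[𝕜] F} {a : E} (hP : HasStrictFDerivAt P (P' : E →L[𝕜] F) a)
    (hf : DifferentiableAt 𝕜 (f ∘ P) a) : DifferentiableAt 𝕜 f (P a) := by
  have hinv : f ∘ P ∘ hP.localInverse P P' a =ᶠ[𝓝 (P a)] f :=
    hP.eventually_right_inverse.mono fun x hx => congrArg f hx
  rw [← hP.localInverse_apply_image] at hf
  exact (hf.comp (P a) hP.to_localInverse.hasFDerivAt.differentiableAt).congr_of_eventuallyEq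
    hinv.symm

section PartialDerivatives

variable {f g : ℝ × ℝ → ℝ} {p : ℝ × ℝ}

theorem hasDerivAt_pdx (hf : DifferentiableAt ℝ f p) :
    HasDerivAt (fun s => f (s, p.2)) (pdx f p) p.1 :=
  (hf.comp p.1 (differentiableAt_id.prodMk (differentiableAt_const p.2))).hasDerivAt

theorem hasDerivAt_pdy (hf : DifferentiableAt ℝ f p) :
    HasDerivAt (fun s => f (p.1, s)) (pdy f p) p.2 :=
  (hf.comp p.2 ((differentiableAt_const p.1).prodMk differentiableAt_id)).hasDerivAt

theorem fderiv_apply_eq_pdx_add_pdy (hf : DifferentiableAt ℝ f p) (v : ℝ × ℝ) :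
    fderiv ℝ f p v = v.1 * pdx f p + v.2 * pdy f p := by
  have hx : pdx f p = fderiv ℝ f p (1, 0) :=
    (hf.hasFDerivAt.comp_hasDerivAt p.1
      ((hasDerivAt_id p.1).prodMk (hasDerivAt_const p.1 p.2))).deriv
  have hy : pdy f p = fderiv ℝ f p (0, 1) :=
    (hf.hasFDerivAt.comp_hasDerivAt p.2
      ((hasDerivAt_const p.2 p.1).prodMk (hasDerivAt_id p.2))).deriv
  have hv : v = v.1 • (1, 0) + v.2 • (0, 1) := by simp
  conv_lhs => rw [hv, map_add, map_smul, map_smul, ← hx, ← hy]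
  rfl

theorem pdx_congr (h : f =ᶠ[𝓝 p] g) : pdx f p = pdx g p :=
  (h.comp_tendsto (continuous_id.prodMk continuous_const).continuousAt).deriv_eq

theorem pdy_congr (h : f =ᶠ[𝓝 p] g) : pdy f p = pdy g p :=
  (h.comp_tendsto (continuous_const.prodMk continuous_id).continuousAt).deriv_eq

theorem differentiableAt_pdx_and_pdy (hf : ContDiffAt ℝ 2 f p) :
    DifferentiableAt ℝ (pdx f) p ∧ DifferentiableAt ℝ (pdy f) p := by
  have hdiff : ∀ᶠ q in 𝓝 p, DifferentiableAt ℝ f q :=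
    (hf.eventually (by simp)).mono fun q hq => hq.differentiableAt two_ne_zero
  have hfderiv (v : ℝ × ℝ) : DifferentiableAt ℝ (fun q => fderiv ℝ f q v) p :=
    (((hf.fderiv_right (m := 1) (by norm_num)).differentiableAt one_ne_zero).clm_apply
      (differentiableAt_const v))
  constructor
  · refine (hfderiv (1, 0)).congr_of_eventuallyEq (hdiff.mono fun q hq => ?_)
    simp [fderiv_apply_eq_pdx_add_pdy hq]
  · refine (hfderiv (0, 1)).congr_of_eventuallyEq (hdiff.mono fun q hq => ?_)
    simp [fderiv_apply_eq_pdx_add_pdy hq]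

end PartialDerivatives

section Polar

variable {f : ℝ × ℝ → ℝ} {p : ℝ × ℝ}

theorem differentiableAt_of_comp_polarCoord_symm (hp : p.1 ≠ 0)
    (hf : DifferentiableAt ℝ (f ∘ polarCoord.symm) p) :
    DifferentiableAt ℝ f (polarCoord.symm p) := by
  have hsmooth : ContDiff ℝ 1 polarCoord.symm :=
    (contDiff_fst.mul (Real.contDiff_cos.comp contDiff_snd)).prodMk
      (contDiff_fst.mul (Real.contDiff_sin.comp contDiff_snd))
  have hdet : (fderivPolarCoordSymm p).det ≠ 0 := by rwa [det_fderivPolarCoordSymm]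
  have hstrict := hsmooth.contDiffAt.hasStrictFDerivAt' (hasFDerivAt_polarCoord_symm p) one_ne_zero
  rw [← ContinuousLinearMap.coe_toContinuousLinearEquivOfDetNeZero _ hdet] at hstrict
  exact differentiableAt_of_comp_hasStrictFDerivAt_equiv hstrict hf

theorem pdx_comp_polarCoord_symm (hf : DifferentiableAt ℝ f (polarCoord.symm p)) :
    pdx (f ∘ polarCoord.symm) p =
      Real.cos p.2 * pdx f (polarCoord.symm p) + Real.sin p.2 * pdy f (polarCoord.symm p) := by
  have hcurve : HasDerivAt (fun s => polarCoord.symm (s, p.2)) (Real.cos p.2, Real.sin p.2) p.1 :=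
    (hasDerivAt_mul_const (Real.cos p.2)).prodMk (hasDerivAt_mul_const (Real.sin p.2))
  exact (hf.hasFDerivAt.comp_hasDerivAt p.1 hcurve).deriv.trans (fderiv_apply_eq_pdx_add_pdy hf _)

theorem pdy_comp_polarCoord_symm (hf : DifferentiableAt ℝ f (polarCoord.symm p)) :
    pdy (f ∘ polarCoord.symm) p = -(p.1 * Real.sin p.2) * pdx f (polarCoord.symm p) +
      p.1 * Real.cos p.2 * pdy f (polarCoord.symm p) := by
  have hcurve : HasDerivAt (fun s => polarCoord.symm (p.1, s))
      (-(p.1 * Real.sin p.2), p.1 * Real.cos p.2) p.2 := by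
    rw [← mul_neg]
    exact ((Real.hasDerivAt_cos _).const_mul _).prodMk ((Real.hasDerivAt_sin _).const_mul _)
  exact (hf.hasFDerivAt.comp_hasDerivAt p.2 hcurve).deriv.trans (fderiv_apply_eq_pdx_add_pdy hf _)

theorem pdx_polarCoord_symm (hp : p.1 ≠ 0) (hf : DifferentiableAt ℝ (f ∘ polarCoord.symm) p) :
    pdx f (polarCoord.symm p) = Real.cos p.2 * pdx (f ∘ polarCoord.symm) p -
      Real.sin p.2 / p.1 * pdy (f ∘ polarCoord.symm) p := by
  have hf' := differentiableAt_of_comp_polarCoord_symm hp hf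
  rw [pdx_comp_polarCoord_symm hf', pdy_comp_polarCoord_symm hf']
  field_simp
  linear_combination -pdx f (polarCoord.symm p) * Real.sin_sq_add_cos_sq p.2

theorem pdy_polarCoord_symm (hp : p.1 ≠ 0) (hf : DifferentiableAt ℝ (f ∘ polarCoord.symm) p) :
    pdy f (polarCoord.symm p) = Real.sin p.2 * pdx (f ∘ polarCoord.symm) p +
      Real.cos p.2 / p.1 * pdy (f ∘ polarCoord.symm) p := by
  have hf' := differentiableAt_of_comp_polarCoord_symm hp hf
  rw [pdx_comp_polarCoord_symm hf', pdy_comp_polarCoord_symm hf']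
  field_simp
  linear_combination -pdy f (polarCoord.symm p) * Real.sin_sq_add_cos_sq p.2

theorem eventually_ne_zero_and_differentiableAt (hp : p.1 ≠ 0) (hf : ContDiffAt ℝ 2 f p) :
    ∀ᶠ q in 𝓝 p, q.1 ≠ 0 ∧ DifferentiableAt ℝ f q :=
  (continuous_fst.continuousAt.eventually_ne hp).and
    ((hf.eventually (by simp)).mono fun _ hq => hq.differentiableAt two_ne_zero)

theorem pdx_pdx_polarCoord_symm (hp : p.1 ≠ 0) (hf : ContDiffAt ℝ 2 (f ∘ polarCoord.symm) p) :
    pdx (pdx f) (polarCoord.symm p) =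
      Real.cos p.2 * (Real.cos p.2 * pdx (pdx (f ∘ polarCoord.symm)) p +
        Real.sin p.2 / p.1 ^ 2 * pdy (f ∘ polarCoord.symm) p -
        Real.sin p.2 / p.1 * pdx (pdy (f ∘ polarCoord.symm)) p) -
      Real.sin p.2 / p.1 * (-Real.sin p.2 * pdx (f ∘ polarCoord.symm) p +
        Real.cos p.2 * pdy (pdx (f ∘ polarCoord.symm)) p -
        Real.cos p.2 / p.1 * pdy (f ∘ polarCoord.symm) p -
        Real.sin p.2 / p.1 * pdy (pdy (f ∘ polarCoord.symm)) p) := by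
  set h := f ∘ polarCoord.symm
  obtain ⟨hx, hy⟩ := differentiableAt_pdx_and_pdy hf
  have hpdx : pdx f ∘ polarCoord.symm =ᶠ[𝓝 p]
      fun q => Real.cos q.2 * pdx h q - Real.sin q.2 / q.1 * pdy h q :=
    (eventually_ne_zero_and_differentiableAt hp hf).mono fun _ hq => pdx_polarCoord_symm hq.1 hq.2
  have hradial : pdx (pdx f ∘ polarCoord.symm) p = Real.cos p.2 * pdx (pdx h) p +
      Real.sin p.2 / p.1 ^ 2 * pdy h p - Real.sin p.2 / p.1 * pdx (pdy h) p := by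
    rw [pdx_congr hpdx]
    refine (((hasDerivAt_pdx hx).const_mul (Real.cos p.2)).sub
      (((hasDerivAt_const p.1 (Real.sin p.2)).fun_div (hasDerivAt_id' p.1) hp).mul
        (hasDerivAt_pdx hy))).deriv.trans ?_
    ring
  have hangular : pdy (pdx f ∘ polarCoord.symm) p = -Real.sin p.2 * pdx h p +
      Real.cos p.2 * pdy (pdx h) p - Real.cos p.2 / p.1 * pdy h p -
        Real.sin p.2 / p.1 * pdy (pdy h) p := by
    rw [pdy_congr hpdx]
    exact (((Real.hasDerivAt_cos _).mul (hasDerivAt_pdy hx)).sub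
      (((Real.hasDerivAt_sin _).div_const _).mul (hasDerivAt_pdy hy))).deriv.trans
        (sub_add_eq_sub_sub _ _ _)
  rw [pdx_polarCoord_symm hp (DifferentiableAt.congr_of_eventuallyEq
    (by fun_prop (disch := assumption)) hpdx), hradial, hangular]

theorem pdy_pdy_polarCoord_symm (hp : p.1 ≠ 0) (hf : ContDiffAt ℝ 2 (f ∘ polarCoord.symm) p) :
    pdy (pdy f) (polarCoord.symm p) =
      Real.sin p.2 * (Real.sin p.2 * pdx (pdx (f ∘ polarCoord.symm)) p -
        Real.cos p.2 / p.1 ^ 2 * pdy (f ∘ polarCoord.symm) p +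
        Real.cos p.2 / p.1 * pdx (pdy (f ∘ polarCoord.symm)) p) +
      Real.cos p.2 / p.1 * (Real.cos p.2 * pdx (f ∘ polarCoord.symm) p +
        Real.sin p.2 * pdy (pdx (f ∘ polarCoord.symm)) p -
        Real.sin p.2 / p.1 * pdy (f ∘ polarCoord.symm) p +
        Real.cos p.2 / p.1 * pdy (pdy (f ∘ polarCoord.symm)) p) := by
  set h := f ∘ polarCoord.symm
  obtain ⟨hx, hy⟩ := differentiableAt_pdx_and_pdy hf
  have hpdy : pdy f ∘ polarCoord.symm =ᶠ[𝓝 p]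
      fun q => Real.sin q.2 * pdx h q + Real.cos q.2 / q.1 * pdy h q :=
    (eventually_ne_zero_and_differentiableAt hp hf).mono fun _ hq => pdy_polarCoord_symm hq.1 hq.2
  have hradial : pdx (pdy f ∘ polarCoord.symm) p = Real.sin p.2 * pdx (pdx h) p -
      Real.cos p.2 / p.1 ^ 2 * pdy h p + Real.cos p.2 / p.1 * pdx (pdy h) p := by
    rw [pdx_congr hpdy]
    refine (((hasDerivAt_pdx hx).const_mul (Real.sin p.2)).add
      (((hasDerivAt_const p.1 (Real.cos p.2)).fun_div (hasDerivAt_id' p.1) hp).mul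
        (hasDerivAt_pdx hy))).deriv.trans ?_
    ring
  have hangular : pdy (pdy f ∘ polarCoord.symm) p = Real.cos p.2 * pdx h p +
      Real.sin p.2 * pdy (pdx h) p - Real.sin p.2 / p.1 * pdy h p +
        Real.cos p.2 / p.1 * pdy (pdy h) p := by
    rw [pdy_congr hpdy]
    refine (((Real.hasDerivAt_sin _).mul (hasDerivAt_pdy hx)).add
      (((Real.hasDerivAt_cos _).div_const _).mul (hasDerivAt_pdy hy))).deriv.trans ?_
    ring
  rw [pdy_polarCoord_symm hp (DifferentiableAt.congr_of_eventuallyEq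
    (by fun_prop (disch := assumption)) hpdy), hradial, hangular]

theorem lap2_polarCoord_symm (hp : p.1 ≠ 0) (hf : ContDiffAt ℝ 2 (f ∘ polarCoord.symm) p) :
    lap2 f (polarCoord.symm p) =
      pdx (pdx (f ∘ polarCoord.symm)) p + pdx (f ∘ polarCoord.symm) p / p.1 +
        pdy (pdy (f ∘ polarCoord.symm)) p / p.1 ^ 2 := by
  rw [lap2, pdx_pdx_polarCoord_symm hp hf, pdy_pdy_polarCoord_symm hp hf]
  set h := f ∘ polarCoord.symm
  field_simp
  linear_combination (p.1 ^ 2 * pdx (pdx h) p + p.1 * pdx h p + pdy (pdy h) p) *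
    Real.sin_sq_add_cos_sq p.2

end Polar

/-! ### Homogeneous functions of negative degree -/

section Homogeneous

theorem deriv_div_pow {𝕜 : Type*} [NontriviallyNormedField 𝕜] (a : 𝕜) (n : ℕ) (r : 𝕜) :
    deriv (fun s => a / s ^ n) r = -(n * a / r ^ (n + 1)) := by
  have hexp : (-n : ℤ) - 1 = -(n + 1 : ℕ) := by
    push_cast
    ring
  simp only [div_eq_mul_inv, ← zpow_natCast, ← zpow_neg]
  rw [deriv_const_mul_field, deriv_zpow, hexp]
  push_cast
  ring

variable {f : ℝ × ℝ → ℝ} {g : ℝ → ℝ} {n : ℕ} {p : ℝ × ℝ}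

theorem pdx_of_eventuallyEq_div_pow (hf : f =ᶠ[𝓝 p] fun q => g q.2 / q.1 ^ n) :
    pdx f p = -(n * g p.2 / p.1 ^ (n + 1)) :=
  (pdx_congr hf).trans (deriv_div_pow (g p.2) n p.1)

theorem pdy_of_eventuallyEq_div_pow (hf : f =ᶠ[𝓝 p] fun q => g q.2 / q.1 ^ n) :
    pdy f p = deriv g p.2 / p.1 ^ n :=
  (pdy_congr hf).trans (deriv_div_const (p.1 ^ n))

theorem lap2_of_eventuallyEq_div_pow (hp : p.1 ≠ 0) (hg : ContDiffAt ℝ 2 g p.2)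
    (hf : f ∘ polarCoord.symm =ᶠ[𝓝 p] fun q => g q.2 / q.1 ^ n) :
    lap2 f (polarCoord.symm p) = (n ^ 2 * g p.2 + deriv (deriv g) p.2) / p.1 ^ (n + 2) := by
  have hsmooth : ContDiffAt ℝ 2 (f ∘ polarCoord.symm) p :=
    ((hg.comp p contDiffAt_snd).div (contDiffAt_fst.pow n) (pow_ne_zero n hp)).congr_of_eventuallyEq
      hf
  have hx : pdx (f ∘ polarCoord.symm) =ᶠ[𝓝 p] fun q => -(n * g q.2) / q.1 ^ (n + 1) :=
    hf.eventuallyEq_nhds.mono fun q hq =>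
      (pdx_of_eventuallyEq_div_pow hq).trans (neg_div _ _).symm
  have hy : pdy (f ∘ polarCoord.symm) =ᶠ[𝓝 p] fun q => deriv g q.2 / q.1 ^ n :=
    hf.eventuallyEq_nhds.mono fun q hq => pdy_of_eventuallyEq_div_pow hq
  rw [lap2_polarCoord_symm hp hsmooth, hx.eq_of_nhds,
    pdx_of_eventuallyEq_div_pow (g := fun t => -(n * g t)) hx, pdy_of_eventuallyEq_div_pow hy]
  push_cast
  field_simp
  ring

theorem sub_mul_pdx_add_sub_mul_pdy_polarCoord_symm (hp : p.1 ≠ 0)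
    (hf : DifferentiableAt ℝ (f ∘ polarCoord.symm) p) (ρ ϕ : ℝ) :
    (p.1 * Real.cos p.2 - ρ * Real.cos ϕ) * pdx f (polarCoord.symm p) +
        (p.1 * Real.sin p.2 - ρ * Real.sin ϕ) * pdy f (polarCoord.symm p) =
      (p.1 - ρ * Real.cos (p.2 - ϕ)) * pdx (f ∘ polarCoord.symm) p +
        ρ * Real.sin (p.2 - ϕ) / p.1 * pdy (f ∘ polarCoord.symm) p := by
  rw [pdx_polarCoord_symm hp hf, pdy_polarCoord_symm hp hf, Real.cos_sub, Real.sin_sub]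
  field_simp
  linear_combination p.1 ^ 2 * pdx (f ∘ polarCoord.symm) p * Real.sin_sq_add_cos_sq p.2

theorem transport_of_eventuallyEq_div_pow {f₀ f₁ : ℝ × ℝ → ℝ} {g₀ g₁ : ℝ → ℝ} {c ρ ϕ : ℝ}
    (hp : p.1 ≠ 0) (hg₀ : ContDiffAt ℝ 2 g₀ p.2) (hg₁ : DifferentiableAt ℝ g₁ p.2)
    (hf₀ : f₀ ∘ polarCoord.symm =ᶠ[𝓝 p] fun q => g₀ q.2 / q.1 ^ n)
    (hf₁ : f₁ ∘ polarCoord.symm =ᶠ[𝓝 p] fun q => g₁ q.2 / q.1 ^ (n + 1))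
    (hode : deriv (deriv g₀) p.2 = -(n ^ 2 + c) * g₀ p.2 +
      ρ * ((n + 1) * Real.cos (p.2 - ϕ) * g₁ p.2 + Real.sin (p.2 - ϕ) * deriv g₁ p.2)) :
    (p.1 * Real.cos p.2 - ρ * Real.cos ϕ) * pdx f₁ (polarCoord.symm p) +
        (p.1 * Real.sin p.2 - ρ * Real.sin ϕ) * pdy f₁ (polarCoord.symm p) +
        (n + 1) * f₁ (polarCoord.symm p) =
      lap2 f₀ (polarCoord.symm p) + c / p.1 ^ 2 * f₀ (polarCoord.symm p) := by
  have hpow : p.1 ^ (n + 1) ≠ 0 := pow_ne_zero _ hp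
  have hdiff : DifferentiableAt ℝ (f₁ ∘ polarCoord.symm) p :=
    DifferentiableAt.congr_of_eventuallyEq (by fun_prop (disch := assumption)) hf₁
  have hvalue₀ : f₀ (polarCoord.symm p) = g₀ p.2 / p.1 ^ n := hf₀.eq_of_nhds
  have hvalue₁ : f₁ (polarCoord.symm p) = g₁ p.2 / p.1 ^ (n + 1) := hf₁.eq_of_nhds
  rw [sub_mul_pdx_add_sub_mul_pdy_polarCoord_symm hp hdiff, pdx_of_eventuallyEq_div_pow hf₁,
    pdy_of_eventuallyEq_div_pow hf₁, lap2_of_eventuallyEq_div_pow hp hg₀ hf₀, hode, hvalue₀,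
    hvalue₁]
  push_cast
  field_simp
  ring

end Homogeneous

/-! ### The angular factor of the Hadamard coefficients -/

section Angular

variable {A : ℝ → ℝ} {N : ℤ} {t : ℝ}

/-- The angular factor `A(t) T_N^{(n)}(cos (t - ϕ))` of one summand of a Hadamard coefficient. -/
noncomputable def angularTerm (A : ℝ → ℝ) (N : ℤ) (n : ℕ) (ϕ t : ℝ) : ℝ :=
  A t * (Polynomial.derivative^[n] (Polynomial.Chebyshev.T ℝ N)).eval (Real.cos (t - ϕ))

theorem contDiffAt_angularTerm {n : WithTop ℕ∞} (hA : ContDiffAt ℝ n A t) (N : ℤ) (j : ℕ) (ϕ : ℝ) :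
    ContDiffAt ℝ n (angularTerm A N j ϕ) t :=
  hA.mul (((Polynomial.contDiff_aeval _ n).comp
    (Real.contDiff_cos.comp (contDiff_id.sub contDiff_const))).contDiffAt)

theorem deriv_angularTerm (hA : DifferentiableAt ℝ A t) (N : ℤ) (n : ℕ) (ϕ : ℝ) :
    deriv (angularTerm A N n ϕ) t =
      angularTerm (deriv A) N n ϕ t - Real.sin (t - ϕ) * angularTerm A N (n + 1) ϕ t := by
  have hcos : HasDerivAt (fun s => Real.cos (s - ϕ)) (-Real.sin (t - ϕ)) t :=
    ((hasDerivAt_id' t).sub_const ϕ).cos.congr_deriv (mul_one _)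
  refine (hA.hasDerivAt.mul ((Polynomial.hasDerivAt _ _).comp t hcos)).deriv.trans ?_
  simp only [angularTerm, Function.iterate_succ_apply', Function.comp_apply]
  ring

theorem deriv_deriv_angularTerm {c : ℝ} (hA : ContDiffAt ℝ 2 A t)
    (hode : deriv (deriv A) t = -((N : ℝ) ^ 2 + c) * A t) (n : ℕ) (ϕ : ℝ) :
    deriv (deriv (angularTerm A N n ϕ)) t = -((n : ℝ) ^ 2 + c) * angularTerm A N n ϕ t -
      2 * ((n + 1) * Real.cos (t - ϕ) * angularTerm A N (n + 1) ϕ t +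
        Real.sin (t - ϕ) * deriv (angularTerm A N (n + 1) ϕ) t) := by
  have hA₁ : ContDiffAt ℝ 1 (deriv A) t := hA.derivWithin (m := 1) (by norm_num)
  have hfirst : deriv (angularTerm A N n ϕ) =ᶠ[𝓝 t] fun s =>
      angularTerm (deriv A) N n ϕ s - Real.sin (s - ϕ) * angularTerm A N (n + 1) ϕ s :=
    (hA.eventually (by simp)).mono fun s hs =>
      deriv_angularTerm (hs.differentiableAt two_ne_zero) N n ϕ
  have hsin : HasDerivAt (fun s => Real.sin (s - ϕ)) (Real.cos (t - ϕ)) t :=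
    ((hasDerivAt_id' t).sub_const ϕ).sin.congr_deriv (mul_one _)
  have hdiff₀ := (contDiffAt_angularTerm hA₁ N n ϕ).differentiableAt one_ne_zero
  have hdiff₁ := (contDiffAt_angularTerm hA N (n + 1) ϕ).differentiableAt two_ne_zero
  have hcheb := Polynomial.Chebyshev.one_sub_X_sq_mul_iterate_derivative_T_eval N n
    (Real.cos (t - ϕ))
  rw [hfirst.deriv_eq, deriv_fun_sub hdiff₀ (hsin.differentiableAt.fun_mul hdiff₁),
    deriv_fun_mul hsin.differentiableAt hdiff₁, hsin.deriv,
    deriv_angularTerm (hA₁.differentiableAt one_ne_zero),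
    deriv_angularTerm (hA.differentiableAt two_ne_zero)]
  simp only [angularTerm, hode]
  linear_combination -A t * hcheb - A t * (Polynomial.derivative^[n + 2]
    (Polynomial.Chebyshev.T ℝ N)).eval (Real.cos (t - ϕ)) * Real.sin_sq_add_cos_sq (t - ϕ)

variable {m : ℕ} {k : Fin (m + 1) → ℤ} {θ : Fin (m + 1) → ℝ}

/-- The function `t ↦ r ^ n * U_n` with `U_n` taken at `x = (r cos t, r sin t)`; it does not depend
on `r`. -/
noncomputable def angularPart (k : Fin (m + 1) → ℤ) (θ : Fin (m + 1) → ℝ) (ρ ϕ : ℝ) (n : ℕ)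
    (t : ℝ) : ℝ :=
  (-2 / ρ) ^ n *
    ∑ i, angularTerm (fun s => cF m k i * PsiF m k θ i s * PsiF m k θ i ϕ) (k i) n ϕ t

theorem Ucoef_eq_angularPart_div_pow (n : ℕ) (r t ρ ϕ : ℝ) :
    Ucoef m k θ n r t ρ ϕ = angularPart k θ ρ ϕ n t / r ^ n := by
  simp only [Ucoef, angularPart, angularTerm, div_pow, mul_pow]
  ring

theorem contDiffAt_amplitude (ht : Wfn m k θ t ≠ 0) (i : Fin (m + 1)) (b : ℝ) :
    ContDiffAt ℝ 2 (fun s => cF m k i * PsiF m k θ i s * b) t :=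
  (contDiffAt_const.mul (contDiffAt_infty.1 (contDiffAt_PsiF k θ ht i) 2)).mul contDiffAt_const

theorem contDiffAt_angularPart (ht : Wfn m k θ t ≠ 0) (ρ ϕ : ℝ) (n : ℕ) :
    ContDiffAt ℝ 2 (angularPart k θ ρ ϕ n) t :=
  contDiffAt_const.mul <| ContDiffAt.sum fun i _ =>
    contDiffAt_angularTerm (contDiffAt_amplitude ht i _) (k i) n ϕ

theorem deriv_deriv_angularPart (ht : Wfn m k θ t ≠ 0) {ρ : ℝ} (hρ : ρ ≠ 0) (ϕ : ℝ) (n : ℕ) :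
    deriv (deriv (angularPart k θ ρ ϕ n)) t =
      -((n : ℝ) ^ 2 + 2 * deriv (deriv fun s => Real.log (Wfn m k θ s)) t) *
        angularPart k θ ρ ϕ n t +
      ρ * ((n + 1) * Real.cos (t - ϕ) * angularPart k θ ρ ϕ (n + 1) t +
        Real.sin (t - ϕ) * deriv (angularPart k θ ρ ϕ (n + 1)) t) := by
  let A (i : Fin (m + 1)) (s : ℝ) : ℝ := cF m k i * PsiF m k θ i s * PsiF m k θ i ϕ
  set c := 2 * deriv (deriv fun s => Real.log (Wfn m k θ s)) t
  have hA (i : Fin (m + 1)) : ContDiffAt ℝ 2 (A i) t := contDiffAt_amplitude ht i _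
  have hode (i : Fin (m + 1)) : deriv (deriv (A i)) t = -((k i : ℝ) ^ 2 + c) * A i t := by
    have hderiv : deriv (A i) =
        fun s => cF m k i * deriv (PsiF m k θ i) s * PsiF m k θ i ϕ := by
      funext s
      rw [deriv_mul_const_field, deriv_const_mul_field]
    rw [hderiv, deriv_mul_const_field, deriv_const_mul_field, deriv_deriv_PsiF k θ ht]
    ring
  have hsmooth (j : ℕ) (i : Fin (m + 1)) : ContDiffAt ℝ 2 (angularTerm (A i) (k i) j ϕ) t :=
    contDiffAt_angularTerm (hA i) (k i) j ϕ
  have hderiv₁ : deriv (angularPart k θ ρ ϕ (n + 1)) t =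
      (-2 / ρ) ^ (n + 1) * ∑ i, deriv (angularTerm (A i) (k i) (n + 1) ϕ) t := by
    rw [← deriv_fun_sum fun i _ => (hsmooth (n + 1) i).differentiableAt two_ne_zero]
    exact deriv_const_mul_field _
  have hderiv₂ : deriv (deriv (angularPart k θ ρ ϕ n)) t =
      (-2 / ρ) ^ n * ∑ i, deriv (deriv (angularTerm (A i) (k i) n ϕ)) t := by
    simp only [← iteratedDeriv_one (f := deriv _), ← iteratedDeriv_succ']
    rw [← iteratedDeriv_fun_sum fun i _ => hsmooth n i]
    exact iteratedDeriv_const_mul_field _ _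
  rw [hderiv₁, hderiv₂]
  simp only [deriv_deriv_angularTerm (hA _) (hode _), Finset.sum_sub_distrib,
    Finset.sum_add_distrib, ← Finset.mul_sum, angularPart, pow_succ]
  field_simp
  ring

end Angular

/-! ### The transport equations -/

theorem hadamard_transport_general (m : ℕ) (k : Fin (m + 1) → ℤ) (hk0 : k 0 = 0)
    (θ : Fin (m + 1) → ℝ) (hθ0 : θ 0 = 0)
    (U : ℕ → ℝ × ℝ → ℝ × ℝ → ℝ) (V : ℝ × ℝ → ℝ)
    (hU : ∀ (ν : ℕ) (r φ ρ ϕ : ℝ), 0 < r → 0 < ρ →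
      Wfn m k θ φ ≠ 0 → Wfn m k θ ϕ ≠ 0 →
      U ν (r * Real.cos φ, r * Real.sin φ) (ρ * Real.cos ϕ, ρ * Real.sin ϕ)
        = Ucoef m k θ ν r φ ρ ϕ)
    (hV : ∀ (r φ : ℝ), 0 < r → Wfn m k θ φ ≠ 0 →
      V (r * Real.cos φ, r * Real.sin φ) = Vpot m k θ r φ) :
    ∀ (ν : ℕ) (r φ ρ ϕ : ℝ), 1 ≤ ν → 0 < r → 0 < ρ →
      Wfn m k θ φ ≠ 0 → Wfn m k θ ϕ ≠ 0 →
      U 0 (r * Real.cos φ, r * Real.sin φ) (ρ * Real.cos ϕ, ρ * Real.sin ϕ) = 1 ∧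
      (r * Real.cos φ - ρ * Real.cos ϕ) *
          pdx (fun y => U ν y (ρ * Real.cos ϕ, ρ * Real.sin ϕ))
            (r * Real.cos φ, r * Real.sin φ) +
        (r * Real.sin φ - ρ * Real.sin ϕ) *
          pdy (fun y => U ν y (ρ * Real.cos ϕ, ρ * Real.sin ϕ))
            (r * Real.cos φ, r * Real.sin φ) +
        (ν : ℝ) * U ν (r * Real.cos φ, r * Real.sin φ) (ρ * Real.cos ϕ, ρ * Real.sin ϕ)
      = -(-lap2 (fun y => U (ν - 1) y (ρ * Real.cos ϕ, ρ * Real.sin ϕ))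
            (r * Real.cos φ, r * Real.sin φ) +
          V (r * Real.cos φ, r * Real.sin φ) *
            U (ν - 1) (r * Real.cos φ, r * Real.sin φ) (ρ * Real.cos ϕ, ρ * Real.sin ϕ)) := by
  intro ν r φ ρ ϕ hν hr hρ hφ hϕ
  obtain ⟨n, rfl⟩ := Nat.exists_eq_add_of_le' hν
  have hnear : ∀ᶠ q in 𝓝 (r, φ), 0 < q.1 ∧ Wfn m k θ q.2 ≠ 0 :=
    (lt_mem_nhds hr).prodMk_nhds (eventually_wronsk_ne_zero (contDiff_chiF k θ) hφ)
  have hpolar (j : ℕ) : (fun y => U j y (ρ * Real.cos ϕ, ρ * Real.sin ϕ)) ∘ polarCoord.symm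
      =ᶠ[𝓝 (r, φ)] fun q => angularPart k θ ρ ϕ j q.2 / q.1 ^ j :=
    hnear.mono fun q hq =>
      (hU j q.1 q.2 ρ ϕ hq.1 hρ hq.2 hϕ).trans (Ucoef_eq_angularPart_div_pow j q.1 q.2 ρ ϕ)
  have htransport := transport_of_eventuallyEq_div_pow (p := (r, φ)) hr.ne'
    (contDiffAt_angularPart hφ ρ ϕ n)
    ((contDiffAt_angularPart hφ ρ ϕ (n + 1)).differentiableAt two_ne_zero) (hpolar n)
    (hpolar (n + 1)) (deriv_deriv_angularPart hφ hρ.ne' ϕ n)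
  simp only [polarCoord_symm_apply] at htransport
  refine ⟨(hU 0 r φ ρ ϕ hr hρ hφ hϕ).trans (Ucoef_zero hk0 hθ0 r ρ hφ hϕ), ?_⟩
  rw [hV r φ hr hφ, Vpot, Nat.add_sub_cancel]
  push_cast
  linear_combination htransport

/-- **Theorem 2 (transport equations).** For the potential `V_k` of Berest–Loutsenko,
the functions `U_ν` given by the explicit formula satisfy `U_0 = 1` and the Hadamard
transport equations `⟨x − ξ, ∇_x U_ν⟩ + ν U_ν = −(−Δ_x U_{ν−1} + V_k(x) U_{ν−1})`. -/
theorem hadamard_transport (m : ℕ) (hm : 1 ≤ m)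
    (k : Fin (m + 1) → ℤ) (hk0 : k 0 = 0) (hk : StrictMono k)
    (θ : Fin (m + 1) → ℝ) (hθ0 : θ 0 = 0)
    (U : ℕ → ℝ × ℝ → ℝ × ℝ → ℝ) (V : ℝ × ℝ → ℝ)
    (hU : ∀ (ν : ℕ) (r φ ρ ϕ : ℝ), 0 < r → 0 < ρ →
      Wfn m k θ φ ≠ 0 → Wfn m k θ ϕ ≠ 0 →
      U ν (r * Real.cos φ, r * Real.sin φ) (ρ * Real.cos ϕ, ρ * Real.sin ϕ)
        = Ucoef m k θ ν r φ ρ ϕ)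
    (hV : ∀ (r φ : ℝ), 0 < r → Wfn m k θ φ ≠ 0 →
      V (r * Real.cos φ, r * Real.sin φ) = Vpot m k θ r φ) :
    ∀ (ν : ℕ) (r φ ρ ϕ : ℝ), 1 ≤ ν → 0 < r → 0 < ρ →
      Wfn m k θ φ ≠ 0 → Wfn m k θ ϕ ≠ 0 →
      U 0 (r * Real.cos φ, r * Real.sin φ) (ρ * Real.cos ϕ, ρ * Real.sin ϕ) = 1 ∧
      (r * Real.cos φ - ρ * Real.cos ϕ) *
          pdx (fun y => U ν y (ρ * Real.cos ϕ, ρ * Real.sin ϕ))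
            (r * Real.cos φ, r * Real.sin φ) +
        (r * Real.sin φ - ρ * Real.sin ϕ) *
          pdy (fun y => U ν y (ρ * Real.cos ϕ, ρ * Real.sin ϕ))
            (r * Real.cos φ, r * Real.sin φ) +
        (ν : ℝ) * U ν (r * Real.cos φ, r * Real.sin φ) (ρ * Real.cos ϕ, ρ * Real.sin ϕ)
      = -(-lap2 (fun y => U (ν - 1) y (ρ * Real.cos ϕ, ρ * Real.sin ϕ))
            (r * Real.cos φ, r * Real.sin φ) +
          V (r * Real.cos φ, r * Real.sin φ) *
            U (ν - 1) (r * Real.cos φ, r * Real.sin φ) (ρ * Real.cos ϕ, ρ * Real.sin ϕ)) :=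
  hadamard_transport_general m k hk0 θ hθ0 U V hU hV
end

section
/- Vanishing of higher Hadamard coefficients (Huygens property). For every integer ν > k_m, the function U_ν vanishes identically: U_ν(x, ξ) = 0 for all x = (r cos φ, r sin φ), ξ = (ρ cos ϕ, ρ sin ϕ) with r > 0, ρ > 0, W(φ) ≠ 0 and W(ϕ) ≠ 0. Consequently the heat-kernel expansion of −Δ + V_k has only finitely many nonzero terms. -/
-- Over `ℤ` the degree is exactly `n.natAbs`; it can only drop on passing to `R`.
theorem natDegree_chebyshevT_le (R : Type*) [CommRing R] (n : ℤ) :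
    (Polynomial.Chebyshev.T R n).natDegree ≤ n.natAbs := by
  rw [← Polynomial.Chebyshev.map_T (Int.castRingHom R), ← Polynomial.Chebyshev.natDegree_T ℤ n]
  exact Polynomial.natDegree_map_le

theorem iterate_derivative_chebyshevT_eq_zero (R : Type*) [CommRing R] {n : ℤ} {ν : ℕ}
    (h : n.natAbs < ν) : Polynomial.derivative^[ν] (Polynomial.Chebyshev.T R n) = 0 :=
  Polynomial.iterate_derivative_eq_zero ((natDegree_chebyshevT_le R n).trans_lt h)

theorem hadamard_coefficients_vanish_general (m : ℕ) (k : Fin (m + 1) → ℤ)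
    (θ : Fin (m + 1) → ℝ) (ν : ℕ) (hν : ∀ i, |k i| < (ν : ℤ)) :
    ∀ (r φ ρ ϕ : ℝ), 0 < r → 0 < ρ → Wfn m k θ φ ≠ 0 → Wfn m k θ ϕ ≠ 0 →
      Ucoef m k θ ν r φ ρ ϕ = 0 := by
  intro r φ ρ ϕ _ _ _ _
  have hT i : Polynomial.derivative^[ν] (Polynomial.Chebyshev.T ℝ (k i)) = 0 :=
    iterate_derivative_chebyshevT_eq_zero ℝ (by zify; exact hν i)
  simp only [Ucoef, hT, Polynomial.eval_zero, mul_zero, Finset.sum_const_zero]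

/-- **Vanishing of higher Hadamard coefficients (Huygens property).**
For every `ν > k_m`, the Hadamard coefficient `U_ν` vanishes identically. -/
theorem hadamard_coefficients_vanish (m : ℕ) (hm : 1 ≤ m)
    (k : Fin (m + 1) → ℤ) (hk0 : k 0 = 0) (hk : StrictMono k)
    (θ : Fin (m + 1) → ℝ) (hθ0 : θ 0 = 0)
    (ν : ℕ) (hν : (k (Fin.last m) : ℤ) < (ν : ℤ)) :
    ∀ (r φ ρ ϕ : ℝ), 0 < r → 0 < ρ → Wfn m k θ φ ≠ 0 → Wfn m k θ ϕ ≠ 0 →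
      Ucoef m k θ ν r φ ρ ϕ = 0 := by
  have h_nonneg i : 0 ≤ k i := hk0 ▸ hk.monotone (Fin.zero_le i)
  exact hadamard_coefficients_vanish_general m k θ ν fun i =>
    (abs_of_nonneg (h_nonneg i)).trans_lt ((hk.monotone (Fin.le_last i)).trans_lt hν)
end

section
/- Separation of variables (Lemma 1). Let q be a continuous real function on an open interval I, let k ≥ 0 be an integer, and let ψ be a twice differentiable function on I satisfying −ψ''(φ) + q(φ)ψ(φ) = k²·ψ(φ) for all φ ∈ I. Fix ρ ≠ 0 and define u(r, φ) := ψ(φ)·T_k((r/ρ + ρ/r)/2). Then for all r > 0 and φ ∈ I, −∂²u/∂r²(r, φ) − (1/r)·∂u/∂r(r, φ) + (1/r²)·(−∂²u/∂φ²(r, φ) + q(φ)·u(r, φ)) = 0; that is, u lies in the kernel of the Schrödinger operator −Δ + q(φ)/r² written in polar coordinates. -/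
/-!
The substitution `x = r / ρ` turns `T_k((x + x⁻¹) / 2)` into `(x ^ k + x ^ (-k)) / 2`. Powers are
eigenfunctions of the Euler operator `r ∂/∂r`, so the radial factor of `u` is an eigenfunction of
`(r ∂/∂r)²` with eigenvalue `k²`. Since `∂²/∂r² + (1/r) ∂/∂r = r⁻² (r ∂/∂r)²`, this cancels the
eigenvalue `k²` of `-∂²/∂φ² + q` on the angular factor `ψ`.
-/

open Filter Polynomial.Chebyshev
open scoped Topology

section ChebyshevEval

theorem chebyshev_T_eval_invOf_two_mul_add {R : Type*} [CommRing R] [Invertible (2 : R)] {x y : R}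
    (hxy : x * y = 1) (n : ℕ) : (T R n).eval (⅟2 * (x + y)) = ⅟2 * (x ^ n + y ^ n) := by
  simp [Polynomial.chebyshev_T_eq_dickson_one_one, ← mul_assoc,
    Polynomial.dickson_one_one_eval_add_inv x y hxy]

theorem chebyshev_T_eval_add_inv_div_two {K : Type*} [Field K] [NeZero (2 : K)] {x : K}
    (hx : x ≠ 0) (n : ℤ) : (T K n).eval ((x + x⁻¹) / 2) = (x ^ n + x ^ (-n)) / 2 := by
  let : Invertible (2 : K) := invertibleOfNonzero two_ne_zero
  have eval_natCast (m : ℕ) : (T K m).eval ((x + x⁻¹) / 2) = (x ^ m + x⁻¹ ^ m) / 2 := by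
    simpa [div_eq_inv_mul] using chebyshev_T_eval_invOf_two_mul_add (mul_inv_cancel₀ hx) m
  obtain ⟨m, rfl | rfl⟩ := n.eq_nat_or_neg
  · simp [eval_natCast]
  · simp [eval_natCast, add_comm]

end ChebyshevEval

section Derivatives

variable {𝕜 : Type*} [NontriviallyNormedField 𝕜]

theorem deriv_deriv_eq_of_eventually_hasDerivAt {F : Type*} [NormedAddCommGroup F]
    [NormedSpace 𝕜 F] {f f' : 𝕜 → F} {f'' : F} {x : 𝕜}
    (hf : ∀ᶠ y in 𝓝 x, HasDerivAt f (f' y) y) (hf' : HasDerivAt f' f'' x) :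
    deriv (deriv f) x = f'' :=
  (hf'.congr_of_eventuallyEq (hf.mono fun _ hy => hy.deriv)).deriv

theorem deriv_deriv_add_one_div_mul_deriv {f g : 𝕜 → 𝕜} {g' x : 𝕜} (hx : x ≠ 0)
    (hf : ∀ᶠ y in 𝓝 x, HasDerivAt f (g y / y) y) (hg : HasDerivAt g g' x) :
    deriv (deriv f) x + 1 / x * deriv f x = g' / x := by
  rw [deriv_deriv_eq_of_eventually_hasDerivAt hf (hg.fun_div (hasDerivAt_id' x) hx),
    hf.self_of_nhds.deriv]
  field_simp
  ring

variable {c x : 𝕜}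

theorem hasDerivAt_div_const_zpow (hc : c ≠ 0) (hx : x ≠ 0) (n : ℤ) :
    HasDerivAt (fun y => (y / c) ^ n) (n * (x / c) ^ n / x) x := by
  have hxc : x / c ≠ 0 := div_ne_zero hx hc
  refine ((hasDerivAt_zpow n (x / c) (.inl hxc)).comp x
    ((hasDerivAt_id' x).div_const c)).congr_deriv ?_
  rw [zpow_sub_one₀ hxc]
  field_simp

theorem hasDerivAt_zpow_add_zpow_neg_div_two (hc : c ≠ 0) (hx : x ≠ 0) (n : ℤ) :
    HasDerivAt (fun y => ((y / c) ^ n + (y / c) ^ (-n)) / 2)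
      (n * (((x / c) ^ n - (x / c) ^ (-n)) / 2) / x) x :=
  (((hasDerivAt_div_const_zpow hc hx n).fun_add
    (hasDerivAt_div_const_zpow hc hx (-n))).div_const 2).congr_deriv (by push_cast; ring)

theorem hasDerivAt_zpow_sub_zpow_neg_div_two (hc : c ≠ 0) (hx : x ≠ 0) (n : ℤ) :
    HasDerivAt (fun y => ((y / c) ^ n - (y / c) ^ (-n)) / 2)
      (n * (((x / c) ^ n + (x / c) ^ (-n)) / 2) / x) x :=
  (((hasDerivAt_div_const_zpow hc hx n).fun_sub
    (hasDerivAt_div_const_zpow hc hx (-n))).div_const 2).congr_deriv (by push_cast; ring)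

end Derivatives

section Separation

variable {𝕜 : Type*} [NontriviallyNormedField 𝕜]

/-- The Schrödinger operator `-Δ + q(φ) / r²` in the polar coordinates `(r, φ)`, applied to `u`. -/
noncomputable def polarSchrodinger (q : 𝕜 → 𝕜) (u : 𝕜 → 𝕜 → 𝕜) (r φ : 𝕜) : 𝕜 :=
  -deriv (deriv fun s => u s φ) r - (1 / r) * deriv (fun s => u s φ) r +
    (1 / r ^ 2) * (-deriv (deriv fun t => u r t) φ + q φ * u r φ)

variable {q ψ ψ' : 𝕜 → 𝕜} {ψ'' r φ : 𝕜}

-- `hR` and `hS` say that `r R' = S` and `r S' = μ R`, that is `(r ∂/∂r)² R = μ R`.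
theorem polarSchrodinger_mul_eq_zero {R S : 𝕜 → 𝕜} {μ : 𝕜} (hr : r ≠ 0)
    (hR : ∀ᶠ s in 𝓝 r, HasDerivAt R (S s / s) s) (hS : HasDerivAt S (μ * R r / r) r)
    (hψ : ∀ᶠ t in 𝓝 φ, HasDerivAt ψ (ψ' t) t) (hψ' : HasDerivAt ψ' ψ'' φ)
    (heig : -ψ'' + q φ * ψ φ = μ * ψ φ) :
    polarSchrodinger q (fun s t => ψ t * R s) r φ = 0 := by
  have radial : deriv (deriv fun s => ψ φ * R s) r + 1 / r * deriv (fun s => ψ φ * R s) r =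
      ψ φ * (μ * R r / r) / r :=
    deriv_deriv_add_one_div_mul_deriv hr
      (hR.mono fun s hs => (hs.const_mul (ψ φ)).congr_deriv (mul_div_assoc ..).symm)
      (hS.const_mul (ψ φ))
  have angular : deriv (deriv fun t => ψ t * R r) φ = ψ'' * R r :=
    deriv_deriv_eq_of_eventually_hasDerivAt (hψ.mono fun t ht => ht.mul_const (R r))
      (hψ'.mul_const (R r))
  rw [polarSchrodinger, angular]
  linear_combination R r / r ^ 2 * heig - radial

theorem separation_of_variables_general [NeZero (2 : 𝕜)] {ρ : 𝕜} (k : ℤ) (hρ : ρ ≠ 0) (hr : r ≠ 0)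
    (hψ : ∀ᶠ t in 𝓝 φ, HasDerivAt ψ (ψ' t) t) (hψ' : HasDerivAt ψ' ψ'' φ)
    (heig : -ψ'' + q φ * ψ φ = (k : 𝕜) ^ 2 * ψ φ) :
    polarSchrodinger q (fun s t => ψ t * (T 𝕜 k).eval ((s / ρ + ρ / s) / 2)) r φ = 0 := by
  have radial_eq {s : 𝕜} (hs : s ≠ 0) :
      (T 𝕜 k).eval ((s / ρ + ρ / s) / 2) = ((s / ρ) ^ k + (s / ρ) ^ (-k)) / 2 := by
    simpa only [inv_div] using chebyshev_T_eval_add_inv_div_two (div_ne_zero hs hρ) k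
  refine polarSchrodinger_mul_eq_zero hr
    (S := fun s => k * (((s / ρ) ^ k - (s / ρ) ^ (-k)) / 2)) ?_ ?_ hψ hψ' heig
  · filter_upwards [eventually_ne_nhds hr] with s hs
    exact (hasDerivAt_zpow_add_zpow_neg_div_two hρ hs k).congr_of_eventuallyEq
      ((eventually_ne_nhds hs).mono fun _ => radial_eq)
  · refine ((hasDerivAt_zpow_sub_zpow_neg_div_two hρ hr k).const_mul (k : 𝕜)).congr_deriv ?_
    rw [radial_eq hr]
    ring

end Separation

/-- **Lemma 1 (separation of variables).** If `ψ` satisfies `−ψ'' + q ψ = k² ψ` on an open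
interval, then for any `ρ ≠ 0` the function `u(r, φ) = ψ(φ) T_k((r/ρ + ρ/r)/2)` lies in the
kernel of `−∂²/∂r² − (1/r)∂/∂r + (1/r²)(−∂²/∂φ² + q(φ))`. -/
theorem separation_of_variables (a b : ℝ) (q ψ : ℝ → ℝ)
    (hq : ContinuousOn q (Set.Ioo a b)) (k : ℕ)
    (hψ : ∀ φ ∈ Set.Ioo a b, DifferentiableAt ℝ ψ φ)
    (hψ' : ∀ φ ∈ Set.Ioo a b, DifferentiableAt ℝ (deriv ψ) φ)
    (heig : ∀ φ ∈ Set.Ioo a b, -deriv (deriv ψ) φ + q φ * ψ φ = (k : ℝ) ^ 2 * ψ φ)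
    (ρ : ℝ) (hρ : ρ ≠ 0) (u : ℝ → ℝ → ℝ)
    (hu : ∀ r φ, u r φ =
      ψ φ * (Polynomial.Chebyshev.T ℝ (k : ℤ)).eval ((r / ρ + ρ / r) / 2)) :
    ∀ r : ℝ, 0 < r → ∀ φ ∈ Set.Ioo a b,
      -deriv (deriv fun s => u s φ) r - (1 / r) * deriv (fun s => u s φ) r +
        (1 / r ^ 2) * (-deriv (deriv fun t => u r t) φ + q φ * u r φ) = 0 := by
  intro r hr φ hφ
  obtain rfl : u = _ := funext₂ hu
  exact separation_of_variables_general k hρ hr.ne'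
    (eventually_of_mem (Ioo_mem_nhds hφ.1 hφ.2) fun t ht => (hψ t ht).hasDerivAt)
    (hψ' φ hφ).hasDerivAt (mod_cast heig φ hφ)
end
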